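/- Let α ∈ (0,1) be irrational such that there is a constant R > 0 bounding, for all N ∈ ℕ, the ratios of the lengths of the subintervals into which {nα mod 1 : n = 0,…,N} divide the circle ℝ/ℤ, and let r ≥ max{√(R/5), 1}. Then for every real m ≥ 16r² and every β ∈ [0,1) there exists n ∈ ℕ satisfying m − 3r√m ≤ n ≤ m + 3r√m and ‖nα − β‖ ≤ r/(2√m), where ‖x‖ denotes the distance from x to the nearest integer. -/

import Mathlib

/-- The points `{nα mod 1 : n = 0, …, N}` on the circle `ℝ/ℤ ≃ [0,1)`. -/
noncomputable def torusPts (α : ℝ) (N : ℕ) : Finset ℝ :=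
  (Finset.range (N + 1)).image fun n : ℕ => Int.fract ((n : ℝ) * α)

/-- For a finite set `T ⊆ [0,1)` of points on the circle `ℝ/ℤ` and `t ∈ T`, the
length of the subinterval of the circle starting at `t`, i.e. the (cyclic) distance
from `t` to the next point of `T`. -/
noncomputable def cyclicGap (T : Finset ℝ) (t : ℝ) : ℝ :=
  sInf {d : ℝ | 0 < d ∧ Int.fract (t + d) ∈ T}

/-- `‖x‖`, the distance from the real number `x` to the nearest integer. -/
noncomputable def nearestIntDist (x : ℝ) : ℝ := |x - round x|

theorem nearestIntDist_le_abs (x : ℝ) (j : ℤ) : nearestIntDist x ≤ |x - j| :=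
  round_le x j

theorem cyclicGap_le (T : Finset ℝ) (t d : ℝ) (hd : 0 < d) (h : Int.fract (t + d) ∈ T) :
    cyclicGap T t ≤ d :=
  csInf_le ⟨0, fun _ hx => hx.1.le⟩ ⟨hd, h⟩

theorem mem_torusPts (α : ℝ) (N n : ℕ) (h : n ≤ N) :
    Int.fract ((n : ℝ) * α) ∈ torusPts α N :=
  Finset.mem_image.2 ⟨n, Finset.mem_range.2 (by omega), rfl⟩

theorem zero_mem_torusPts (α : ℝ) (N : ℕ) : (0 : ℝ) ∈ torusPts α N := by
  simpa using mem_torusPts α N 0 (Nat.zero_le _)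

/-- Dirichlet: some gap has length at most `1/(N+1)`. -/
theorem exists_small_gap (α : ℝ) (hirr : Irrational α) (N : ℕ) (hN : 0 < N) :
    ∃ u ∈ torusPts α N, cyclicGap (torusPts α N) u ≤ 1 / ((N : ℝ) + 1) := by
  obtain ⟨k, hk0, hkN, hk⟩ := Real.exists_nat_abs_mul_sub_round_le α hN
  set j := round ((k : ℝ) * α) with hj
  have hne : (k : ℝ) * α - j ≠ 0 := by
    have := (hirr.natCast_mul hk0.ne').ne_int j
    exact sub_ne_zero.2 this
  have hkm := mem_torusPts α N k hkN
  rcases lt_or_gt_of_ne hne with hneg | hpos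
  · refine ⟨_, hkm, (cyclicGap_le _ _ (-((k : ℝ) * α - j)) (by linarith) ?_).trans
      ((neg_le_abs _).trans hk)⟩
    have : Int.fract ((k : ℝ) * α) + -((k : ℝ) * α - j)
        = ((j - ⌊(k : ℝ) * α⌋ : ℤ) : ℝ) := by
      rw [Int.fract]; push_cast; ring
    rw [this, Int.fract_intCast]
    exact zero_mem_torusPts α N
  · refine ⟨0, zero_mem_torusPts α N, (cyclicGap_le _ _ ((k : ℝ) * α - j) hpos ?_).trans
      ((le_abs_self _).trans hk)⟩
    rw [zero_add, Int.fract_sub_intCast]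
    exact hkm

/-- If all gaps are shorter than `h`, every point of the circle is within `h/2` of a point. -/
theorem exists_close (T : Finset ℝ) (h0 : (0 : ℝ) ∈ T) (h : ℝ)
    (hT : ∀ t ∈ T, 0 ≤ t ∧ t < 1) (hg : ∀ t ∈ T, cyclicGap T t < h) (γ : ℝ) (hγ0 : 0 ≤ γ)
    (hγ1 : γ < 1) : ∃ t ∈ T, ∃ j : ℤ, |t + j - γ| ≤ h / 2 := by
  obtain ⟨t, ht, hmax⟩ := (T.filter (· ≤ γ)).exists_max_image id
    ⟨0, Finset.mem_filter.2 ⟨h0, hγ0⟩⟩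
  obtain ⟨htT, htγ⟩ := Finset.mem_filter.1 ht
  have hne : {d : ℝ | 0 < d ∧ Int.fract (t + d) ∈ T}.Nonempty := by
    refine ⟨1, one_pos, ?_⟩
    rw [Int.fract_add_one, Int.fract_eq_self.2 (hT t htT)]
    exact htT
  obtain ⟨d, ⟨hd0, hdT⟩, hdh⟩ := exists_lt_of_csInf_lt hne (hg t htT)
  have key : γ < t + d := by
    by_contra hcon
    have hle : t + d ≤ γ := not_lt.1 hcon
    have hf : Int.fract (t + d) = t + d :=
      Int.fract_eq_self.2 ⟨by linarith [(hT t htT).1], by linarith⟩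
    rw [hf] at hdT
    have := hmax (t + d) (Finset.mem_filter.2 ⟨hdT, hle⟩)
    simp only [id] at this
    linarith
  by_cases hc : γ - t ≤ h / 2
  · refine ⟨t, htT, 0, ?_⟩
    rw [abs_le]; push_cast; constructor <;> linarith
  · refine ⟨_, hdT, ⌊t + d⌋, ?_⟩
    rw [Int.fract_add_floor, abs_le]; constructor <;> linarith

/-- Let `α ∈ (0,1)` be irrational and suppose `R > 0` bounds, for
all `N ∈ ℕ`, the ratios of the lengths of the subintervals into which the points
`{nα mod 1 : n = 0, …, N}` divide the circle `ℝ/ℤ`.  Let `r ≥ max{√(R/5), 1}`.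
Then for every real `m ≥ 16r²` and every `β ∈ [0,1)` there exists `n ∈ ℕ` with
`m − 3r√m ≤ n ≤ m + 3r√m` and `‖nα − β‖ ≤ r/(2√m)`. -/
theorem solvable_of_bounded_gap_ratios
    (α : ℝ) (hα : α ∈ Set.Ioo (0 : ℝ) 1) (hirr : Irrational α)
    (R : ℝ) (hR : 0 < R)
    (hratio : ∀ N : ℕ, ∀ t ∈ torusPts α N, ∀ u ∈ torusPts α N,
      cyclicGap (torusPts α N) t ≤ R * cyclicGap (torusPts α N) u)
    (r : ℝ) (hr : max (Real.sqrt (R / 5)) 1 ≤ r) :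
    ∀ m : ℝ, 16 * r ^ 2 ≤ m → ∀ β ∈ Set.Ico (0 : ℝ) 1, ∃ n : ℕ,
      m - 3 * r * Real.sqrt m ≤ (n : ℝ) ∧
      (n : ℝ) ≤ m + 3 * r * Real.sqrt m ∧
      nearestIntDist ((n : ℝ) * α - β) ≤ r / (2 * Real.sqrt m) := by
  intro m hm β _
  have hr1 : 1 ≤ r := (le_max_right _ _).trans hr
  have hRr : R ≤ 5 * r ^ 2 := by
    have h1 : Real.sqrt (R / 5) ≤ r := (le_max_left _ _).trans hr
    have h2 := (Real.sqrt_le_left (by linarith)).1 h1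
    linarith
  have hm0 : 0 ≤ m := by nlinarith [sq_nonneg r]
  set s := Real.sqrt m with hs
  have hss : s * s = m := Real.mul_self_sqrt hm0
  have hs4 : 4 * r ≤ s := Real.le_sqrt_of_sq_le (by nlinarith)
  have hs0 : 0 < s := by linarith
  have hrs : 4 ≤ r * s := by nlinarith
  have hlow : 0 ≤ m - 3 * r * s := by nlinarith
  set N := ⌊6 * r * s - 1⌋₊ with hN
  have hNle : (N : ℝ) ≤ 6 * r * s - 1 := Nat.floor_le (by nlinarith)
  have hNlt : 6 * r * s - 1 < N + 1 := Nat.lt_floor_add_one _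
  have hNpos : 0 < N := Nat.floor_pos.2 (by nlinarith)
  set k := ⌈m - 3 * r * s⌉₊ with hk
  have hk1 : m - 3 * r * s ≤ k := Nat.le_ceil _
  have hk2 : (k : ℝ) < m - 3 * r * s + 1 := Nat.ceil_lt_add_one hlow
  obtain ⟨u, hu, hug⟩ := exists_small_gap α hirr N hNpos
  have hN1 : (0 : ℝ) < (N : ℝ) + 1 := by positivity
  have hgap : ∀ t ∈ torusPts α N, cyclicGap (torusPts α N) t < r / s := by
    intro t ht
    have h1 := (hratio N t ht u hu).trans (mul_le_mul_of_nonneg_left hug hR.le)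
    refine h1.trans_lt ?_
    rw [mul_one_div, div_lt_div_iff₀ hN1 hs0]
    have h2 : R * s ≤ 5 * r ^ 2 * s := mul_le_mul_of_nonneg_right hRr hs0.le
    have h3 : r * (6 * r * s - 1) < r * (N + 1) := mul_lt_mul_of_pos_left hNlt (by linarith)
    nlinarith
  have hT : ∀ t ∈ torusPts α N, 0 ≤ t ∧ t < 1 := by
    intro t ht
    obtain ⟨n, _, rfl⟩ := Finset.mem_image.1 ht
    exact ⟨Int.fract_nonneg _, Int.fract_lt_one _⟩
  obtain ⟨t, ht, j, hj⟩ := exists_close (torusPts α N) (zero_mem_torusPts α N) (r / s) hT hgap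
    (Int.fract (β - k * α)) (Int.fract_nonneg _) (Int.fract_lt_one _)
  obtain ⟨i, hi, rfl⟩ := Finset.mem_image.1 ht
  have hiN : (i : ℝ) ≤ N := by
    exact_mod_cast Nat.lt_succ_iff.1 (Finset.mem_range.1 hi)
  have hi0 : (0 : ℝ) ≤ i := Nat.cast_nonneg i
  refine ⟨k + i, ?_, ?_, ?_⟩
  · push_cast; linarith
  · push_cast; linarith
  · refine (nearestIntDist_le_abs _ (⌊(i : ℝ) * α⌋ - j - ⌊β - k * α⌋)).trans ?_
    have e : r / (2 * s) = r / s / 2 := by field_simp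
    rw [e]
    refine le_trans (le_of_eq ?_) hj
    congr 1
    simp only [Int.fract]
    push_cast
    ring
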